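/- Let α be a type and let R, Ri be binary relations on α with Ri ⊆ R, satisfying the innermost local commutation property: whenever R G H and Ri G J with H ≠ J, either R J H, or there exists K with Ri H K and R J K. If G R^n H with H R-normal and G Ri^m J with J R-normal, then H = J and n ≤ m. -/

import Mathlib

/-- `NSteps R n x y` : there is a chain `x = f 0, f 1, …, f n = y` with
`R (f i) (f (i+1))` for each `i < n`, i.e. an `n`-step `R`-reduction sequence. -/
def NSteps {α : Type*} (R : α → α → Prop) (n : ℕ) (x y : α) : Prop :=
  ∃ f : ℕ → α, f 0 = x ∧ f n = y ∧ ∀ i < n, R (f i) (f (i + 1))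

/-- `x` is `R`-normal: no `R`-step is possible from `x`. -/
def RNormal {α : Type*} (R : α → α → Prop) (x : α) : Prop :=
  ¬ ∃ y, R x y

namespace NSteps

variable {α : Type*} {R Ri : α → α → Prop} {n m : ℕ} {x y z : α}

theorem eq_of_zero (h : NSteps R 0 x y) : x = y := by
  obtain ⟨f, rfl, rfl, -⟩ := h
  rfl

theorem exists_head (h : NSteps R (n + 1) x z) : ∃ y, R x y ∧ NSteps R n y z := by
  obtain ⟨f, rfl, rfl, hf⟩ := h
  exact ⟨f 1, hf 0 n.succ_pos, fun i => f (i + 1), rfl, rfl,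
    fun i hi => hf (i + 1) (Nat.succ_lt_succ hi)⟩

theorem head (hxy : R x y) (h : NSteps R n y z) : NSteps R (n + 1) x z := by
  obtain ⟨f, rfl, rfl, hf⟩ := h
  refine ⟨fun i => Nat.casesOn i x f, rfl, rfl, fun i hi => ?_⟩
  cases i with
  | zero => exact hxy
  | succ i => exact hf i (Nat.lt_of_succ_lt_succ hi)

/-- Under innermost local commutation, an arbitrary `R`-step strictly decreases the length of an
innermost reduction to a given normal form. -/
theorem exists_lt_of_step
    (hcomm : ∀ G H J, R G H → Ri G J → H ≠ J → R J H ∨ ∃ K, Ri H K ∧ R J K)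
    (hz : RNormal R z) (h : NSteps Ri m x z) (hxy : R x y) :
    ∃ k < m, NSteps Ri k y z := by
  induction m generalizing x y with
  | zero => exact (hz ⟨y, h.eq_of_zero ▸ hxy⟩).elim
  | succ m ih =>
    obtain ⟨w, hxw, hw⟩ := h.exists_head
    by_cases hyw : y = w
    · exact ⟨m, m.lt_succ_self, hyw ▸ hw⟩
    · obtain hwy | ⟨v, hyv, hwv⟩ := hcomm x y w hxy hxw hyw
      · obtain ⟨k, hk, hky⟩ := ih hw hwy
        exact ⟨k, hk.trans m.lt_succ_self, hky⟩
      · obtain ⟨k, hk, hkv⟩ := ih hw hwv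
        exact ⟨k + 1, Nat.succ_lt_succ hk, hkv.head hyv⟩

end NSteps

theorem innermost_slowest
    {α : Type*} (R Ri : α → α → Prop)
    (hsub : ∀ x y, Ri x y → R x y)
    (hcomm : ∀ G H J, R G H → Ri G J → H ≠ J →
      R J H ∨ ∃ K, Ri H K ∧ R J K)
    (n m : ℕ) (G H J : α)
    (hH : NSteps R n G H) (hHnf : RNormal R H)
    (hJ : NSteps Ri m G J) (hJnf : RNormal R J) :
    H = J ∧ n ≤ m := by
  induction n generalizing G m with
  | zero =>
    obtain rfl := hH.eq_of_zero
    cases m with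
    | zero => exact ⟨hJ.eq_of_zero, le_rfl⟩
    | succ m =>
      obtain ⟨K, hK, -⟩ := hJ.exists_head
      exact (hHnf ⟨K, hsub _ _ hK⟩).elim
  | succ n ih =>
    obtain ⟨K, hGK, hKH⟩ := hH.exists_head
    obtain ⟨k, hk, hKJ⟩ := hJ.exists_lt_of_step hcomm hJnf hGK
    obtain ⟨hHJ, hnk⟩ := ih k K hKH hKJ
    exact ⟨hHJ, hnk.trans_lt hk⟩
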